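/- Let A, B ⊆ [m] with A∩B ≠ ∅ and |A\B| = |B\A| = 1 (so |A| = |B| ≥ 2), Δ = Δ_A ∪ Δ_B, and D = Δ + wΔ ⊆ F_4^m. Then C_{D^*} has length 9·2^{2|A|−2} − 1, exactly 4^{|A|+1} distinct codewords, and the multiset {wt(c_{D^*}(x)) : x ∈ F_4^m} is obtained from the following weight–multiplicity pairs, each multiplicity multiplied by 4^{m−|A|−1}: weight 0, multiplicity 1; weight 5·2^{2|A|−2}, multiplicity 6; weight 2^{2|A|+1}, multiplicity 3; weight 7·2^{2|A|−2}, multiplicity 6; weight 27·2^{2|A|−4}, multiplicity 4^{|A|+1} − 16. In particular C_{D^*} is a four-weight quaternary code. -/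

import Mathlib

open Finset

/-- The support of a binary vector, as a finset of coordinates. -/
def supp {m : ℕ} (v : Fin m → ZMod 2) : Finset (Fin m) :=
  Finset.univ.filter (fun i => v i ≠ 0)

/-- The simplicial complex generated by `A`: all binary vectors with support contained in `A`. -/
def delta {m : ℕ} (A : Finset (Fin m)) : Finset (Fin m → ZMod 2) :=
  Finset.univ.filter (fun v => supp v ⊆ A)

variable {F : Type} [Field F] [Fintype F] [DecidableEq F]

/-- The embedding of `F_2 = {0,1}` into a field `F`. -/
def e2 (a : ZMod 2) : F := (a.val : F)

/-- The inner product `x·d = Σ x_i d_i` of two vectors over `F`. -/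
def dotF {m : ℕ} (x d : Fin m → F) : F := ∑ i, x i * d i

/-- The quaternary vector `d_1 + w·d_2` attached to a pair of binary vectors. -/
def dvec {m : ℕ} (w : F) (p : (Fin m → ZMod 2) × (Fin m → ZMod 2)) : Fin m → F :=
  fun i => e2 (p.1 i) + w * e2 (p.2 i)

/-- The Hamming weight of the codeword `c_D(x) = (x·d)_{d∈D}`. -/
def wtF {m : ℕ} (D : Finset (Fin m → F)) (x : Fin m → F) : ℕ :=
  (D.filter (fun d => dotF x d ≠ 0)).card

/-- The codeword `c_D(x) = (x·d)_{d∈D}` of the code with defining set `D`. -/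
def codeword {m : ℕ} (D : Finset (Fin m → F)) (x : Fin m → F) : {d // d ∈ D} → F :=
  fun d => dotF x d.1

/-!
Write `A \ B = {a}`, `B \ A = {b}` and `J = A ∪ B`. A binary vector lies in `Δ_A ∪ Δ_B` iff its
support is contained in `J` and its coordinates at `a` and `b` are not both nonzero. Hence `D`
consists of the quaternary vectors supported in `J` whose pair of coordinates at `a` and `b` lies
in the nine-element set `S ⊆ F_4²` formed by the two axes and the pairs `(1, w)`, `(w, 1)`.

If `x` does not vanish on `J \ {a, b}`, then `x i ≠ 0` for some coordinate `i` in that set. Since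
`D` is invariant under translation along `i`, the products `x·d` are equidistributed over `F_4` and
the weight is three quarters of `|D|`. If `x` vanishes on `J \ {a, b}`, its weight is
`4 ^ (|J| - 2)` times the weight of `(x a, x b)` in the length-nine code with defining set `S`. Up
to scaling by a nonzero constant, that pair is `(0, y)`, with weights `0, 5, 5, 5`, or `(1, y)`,
with weights `5, 7, 8, 7`.
-/

section Cylinder

theorem card_sdiff_pair {ι : Type*} [DecidableEq ι] {J : Finset ι} {a b : ι} (ha : a ∈ J)
    (hb : b ∈ J) (hab : a ≠ b) : #(J \ {a, b}) = #J - 2 := by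
  rw [card_sdiff_of_subset (by simp [insert_subset_iff, ha, hb]), card_pair hab]

variable {ι K : Type*} [Fintype ι] [DecidableEq ι] [Fintype K] [DecidableEq K]

theorem card_filter_forall_notMem_eq (U : Finset ι) (z : ι → K) :
    #{d : ι → K | ∀ i ∉ U, d i = z i} = Fintype.card K ^ #U := by
  have eq_piFinset : ({d : ι → K | ∀ i ∉ U, d i = z i} : Finset (ι → K))
      = Fintype.piFinset fun i => if i ∈ U then univ else {z i} := by
    ext d
    simp only [mem_filter, mem_univ, true_and, Fintype.mem_piFinset]
    refine forall_congr' fun i => ?_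
    by_cases hi : i ∈ U <;> simp [hi]
  simp [eq_piFinset, Fintype.card_piFinset, apply_ite card, prod_ite_mem]

variable [Zero K] {J : Finset ι} {a b : ι}

/-- The vectors with support in `J` whose coordinates at `a` and `b` form a pair in `Q`. The
defining sets of the codes considered here have this shape, with `J = A ∪ B`. -/
def cylinder (J : Finset ι) (a b : ι) (Q : Finset (K × K)) : Finset (ι → K) :=
  {d | (∀ i ∉ J, d i = 0) ∧ (d a, d b) ∈ Q}

theorem mem_cylinder {Q : Finset (K × K)} {d : ι → K} :
    d ∈ cylinder J a b Q ↔ (∀ i ∉ J, d i = 0) ∧ (d a, d b) ∈ Q := by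
  simp [cylinder]

theorem mem_cylinder_compl_univ {U : Finset ι} {x : ι → K} :
    x ∈ cylinder Uᶜ a b univ ↔ ∀ i ∈ U, x i = 0 := by
  simp [mem_cylinder]

theorem card_filter_support_subset_eval_eq (ha : a ∈ J) (hb : b ∈ J) (hab : a ≠ b) (p : K × K) :
    #{d : ι → K | (∀ i ∉ J, d i = 0) ∧ (d a, d b) = p} = Fintype.card K ^ (#J - 2) := by
  rw [← card_sdiff_pair ha hb hab, ← card_filter_forall_notMem_eq _
    (Function.update (Function.update (0 : ι → K) a p.1) b p.2)]
  congr 1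
  ext d
  simp only [mem_filter, mem_univ, true_and, mem_sdiff, mem_insert, mem_singleton,
    Function.update_apply, Prod.ext_iff, Pi.zero_apply]
  constructor
  · rintro ⟨hJ, hda, hdb⟩ i hi
    split_ifs with hib hia
    · rw [hib, hdb]
    · rw [hia, hda]
    · exact hJ i fun hiJ => hi ⟨hiJ, by simp [hia, hib]⟩
  · intro h
    refine ⟨fun i hi => ?_, by simpa [hab] using h a, by simpa using h b⟩
    have hia : i ≠ a := by rintro rfl; exact hi ha
    have hib : i ≠ b := by rintro rfl; exact hi hb
    simpa [hia, hib] using h i fun hiJ => hi hiJ.1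

theorem map_eval_cylinder (ha : a ∈ J) (hb : b ∈ J) (hab : a ≠ b) (Q : Finset (K × K)) :
    (cylinder J a b Q).val.map (fun d => (d a, d b)) = Fintype.card K ^ (#J - 2) • Q.val := by
  ext p
  have count_eq : ((cylinder J a b Q).val.map fun d => (d a, d b)).count p
      = #{d ∈ cylinder J a b Q | p = (d a, d b)} := Multiset.count_map ..
  rw [count_eq, Multiset.count_nsmul, Multiset.count_eq_of_nodup Q.nodup]
  split_ifs with hp <;> rw [mem_val] at hp
  · rw [mul_one, ← card_filter_support_subset_eval_eq ha hb hab p]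
    congr 1
    ext d
    simp only [mem_filter, mem_cylinder, mem_univ, true_and, eq_comm (a := p)]
    exact ⟨fun h => ⟨h.1.1, h.2⟩, fun h => ⟨⟨h.1, h.2 ▸ hp⟩, h.2⟩⟩
  · rw [mul_zero, card_eq_zero, filter_eq_empty_iff]
    rintro d hd rfl
    exact hp (mem_cylinder.1 hd).2

theorem card_cylinder (ha : a ∈ J) (hb : b ∈ J) (hab : a ≠ b) (Q : Finset (K × K)) :
    #(cylinder J a b Q) = Fintype.card K ^ (#J - 2) * #Q := by
  simpa using congrArg Multiset.card (map_eval_cylinder ha hb hab Q)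

end Cylinder

section Codewords

variable {K : Type} [Field K] {m : ℕ}

theorem dotF_eq_dotProduct (x d : Fin m → K) : dotF x d = x ⬝ᵥ d := rfl

variable [DecidableEq K] {D : Finset (Fin m → K)} {x : Fin m → K}

theorem wtF_erase_zero (D : Finset (Fin m → K)) (x : Fin m → K) :
    wtF (D.erase 0) x = wtF D x := by
  rw [wtF, filter_erase, erase_eq_of_notMem, wtF]
  exact fun h => (mem_filter.1 h).2 (dotProduct_zero x)

variable [Fintype K]

theorem card_mul_wtF_of_add_smul_mem (u : Fin m → K) (hu : dotF x u ≠ 0)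
    (hD : ∀ d ∈ D, ∀ c : K, d + c • u ∈ D) :
    Fintype.card K * wtF D x = (Fintype.card K - 1) * #D := by
  have fiber_card_le (c c' : K) : #{d ∈ D | dotF x d = c} ≤ #{d ∈ D | dotF x d = c'} := by
    refine card_le_card_of_injOn (fun d => d + ((c' - c) / dotF x u) • u) (fun d hd => ?_)
      fun d _ d' _ h => add_right_cancel h
    obtain ⟨hdD, rfl⟩ := mem_filter.1 hd
    refine mem_filter.2 ⟨hD d hdD _, ?_⟩
    rw [dotF_eq_dotProduct] at hu ⊢
    rw [dotProduct_add, dotProduct_smul, smul_eq_mul, dotF_eq_dotProduct, dotF_eq_dotProduct,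
      div_mul_cancel₀ _ hu, add_sub_cancel]
  have card_eq_mul_fiber : #D = Fintype.card K * #{d ∈ D | dotF x d = 0} := by
    rw [card_eq_sum_card_fiberwise (f := dotF x) (t := univ) (by simp),
      sum_congr rfl fun c _ => (fiber_card_le c 0).antisymm (fiber_card_le 0 c)]
    simp
  have fiber_add_wtF : #{d ∈ D | dotF x d = 0} + wtF D x = #D :=
    card_filter_add_card_filter_not _
  rw [Nat.sub_mul, one_mul, eq_tsub_iff_add_eq_of_le (Nat.le_mul_of_pos_left _ Fintype.card_pos)]
  nlinarith

theorem card_image_codeword {J : Finset (Fin m)} (hsupp : ∀ d ∈ D, ∀ i ∉ J, d i = 0)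
    (hunit : ∀ j ∈ J, Pi.single j 1 ∈ D) :
    #(univ.image fun x : Fin m → K => codeword D x) = Fintype.card K ^ #J := by
  have codeword_eq_iff (x y : Fin m → K) :
      codeword D x = codeword D y ↔ ∀ j ∈ J, x j = y j := by
    refine ⟨fun h j hj => ?_, fun h => funext fun d => ?_⟩
    · simpa [codeword, dotF_eq_dotProduct] using congrFun h ⟨_, hunit j hj⟩
    · rw [codeword, codeword, dotF, dotF]
      refine sum_congr rfl fun i _ => ?_
      by_cases hi : i ∈ J
      · rw [h i hi]
      · rw [hsupp d d.2 i hi, mul_zero, mul_zero]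
  have image_eq : (univ.image fun x : Fin m → K => codeword D x)
      = ({x | ∀ i ∉ J, x i = 0} : Finset (Fin m → K)).image (codeword D) := by
    refine (image_subset_iff.2 fun x _ => mem_image.2 ?_).antisymm
      (image_subset_image (subset_univ _))
    refine ⟨fun i => if i ∈ J then x i else 0, ?_, (codeword_eq_iff _ _).2 fun j hj => if_pos hj⟩
    simp +contextual
  rw [image_eq, card_image_of_injOn]
  · convert card_filter_forall_notMem_eq J fun _ => (0 : K)
  intro x hx y hy h
  simp only [coe_filter, mem_univ, true_and, Set.mem_ofPred_eq] at hx hy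
  funext i
  by_cases hi : i ∈ J
  · exact (codeword_eq_iff x y).1 h i hi
  · rw [hx i hi, hy i hi]

end Codewords

section PairWeight

theorem bind_univ_of_forall_ne {α β : Type*} [Fintype α] (a : α) {R : α → Multiset β}
    {s : Multiset β} (hR : ∀ x ≠ a, R x = s) :
    univ.val.bind R = R a + (Fintype.card α - 1) • s := by
  classical
  rw [← insert_erase (mem_univ a), insert_val_of_notMem (notMem_erase _ _), Multiset.cons_bind,
    Multiset.bind_congr fun x hx => hR x (ne_of_mem_erase hx), Multiset.bind, Multiset.map_const',
    Multiset.join, Multiset.sum_replicate, card_val, card_erase_of_mem (mem_univ _), card_univ]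

variable {K : Type} [Field K] [DecidableEq K]

/-- The weight of the codeword attached to `p` in the code of length `#S` with defining set
`S ⊆ K²`, written with pairs instead of vectors indexed by `Fin 2`. -/
def pairWeight (S : Finset (K × K)) (p : K × K) : ℕ :=
  #{s ∈ S | p.1 * s.1 + p.2 * s.2 ≠ 0}

theorem pairWeight_mul_mul {c : K} (hc : c ≠ 0) (S : Finset (K × K)) (x y : K) :
    pairWeight S (c * x, c * y) = pairWeight S (x, y) := by
  simp [pairWeight, mul_assoc, ← mul_add, hc]

variable [Fintype K]

theorem map_pairWeight (S : Finset (K × K)) :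
    univ.val.map (pairWeight S) = univ.val.map (fun y => pairWeight S (0, y))
      + (Fintype.card K - 1) • univ.val.map (fun y => pairWeight S (1, y)) := by
  have map_eq_bind : univ.val.map (pairWeight S)
      = univ.val.bind fun x => univ.val.map fun y => pairWeight S (x, y) := by
    rw [← univ_product_univ, product_val]
    simp only [SProd.sprod, Multiset.product, Multiset.map_bind, Multiset.map_map,
      Function.comp_def]
  rw [map_eq_bind]
  refine bind_univ_of_forall_ne 0 fun x hx => ?_
  conv_lhs => rw [← Multiset.map_univ_val_equiv (Equiv.mulLeft₀ x hx), Multiset.map_map]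
  refine Multiset.map_congr rfl fun y _ => ?_
  simpa using pairWeight_mul_mul hx S 1 y

variable {m : ℕ} {J : Finset (Fin m)} {a b : Fin m} {S : Finset (K × K)} {x : Fin m → K}

theorem wtF_cylinder_of_forall_eq_zero (ha : a ∈ J) (hb : b ∈ J) (hab : a ≠ b)
    (hx : ∀ i ∈ J \ {a, b}, x i = 0) :
    wtF (cylinder J a b S) x = Fintype.card K ^ (#J - 2) * pairWeight S (x a, x b) := by
  rw [pairWeight, ← card_cylinder ha hb hab, wtF]
  congr 1
  ext d
  simp only [mem_filter, mem_cylinder, and_assoc]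
  refine and_congr_right fun hd => and_congr_right fun _ => ?_
  have dotF_eq : dotF x d = x a * d a + x b * d b := by
    refine Fintype.sum_eq_add a b hab fun i hi => ?_
    by_cases hiJ : i ∈ J
    · rw [hx i (by simp [hiJ, hi]), zero_mul]
    · rw [hd i hiJ, mul_zero]
  rw [dotF_eq]

theorem wtF_cylinder_of_ne_zero (ha : a ∈ J) (hb : b ∈ J) (hab : a ≠ b) {j : Fin m}
    (hj : j ∈ J \ {a, b}) (hx : x j ≠ 0) :
    wtF (cylinder J a b S) x = (Fintype.card K - 1) * Fintype.card K ^ (#J - 3) * #S := by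
  obtain ⟨hjJ, hja, hjb⟩ : j ∈ J ∧ j ≠ a ∧ j ≠ b := by simpa using hj
  have three_le : 3 ≤ #J := by
    rw [← card_eq_three.2 ⟨a, b, j, hab, hja.symm, hjb.symm, rfl⟩]
    exact card_le_card (by simp [insert_subset_iff, ha, hb, hjJ])
  have balanced := card_mul_wtF_of_add_smul_mem (D := cylinder J a b S) (x := x) (Pi.single j 1)
    (by simpa [dotF_eq_dotProduct] using hx) fun d hd c => by
      rw [mem_cylinder] at hd ⊢
      refine ⟨fun i hi => ?_, by simpa [hja.symm, hjb.symm] using hd.2⟩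
      have hij : i ≠ j := by rintro rfl; exact hi hjJ
      simp [hij, hd.1 i hi]
  rw [card_cylinder ha hb hab, show #J - 2 = #J - 3 + 1 by omega, pow_succ] at balanced
  refine Nat.eq_of_mul_eq_mul_left (Fintype.card_pos (α := K)) ?_
  rw [balanced]
  ring

theorem card_compl_sdiff_pair (ha : a ∈ J) (hb : b ∈ J) (hab : a ≠ b) :
    #(J \ {a, b})ᶜ - 2 = m - #J := by
  have two_le : 2 ≤ #J := card_pair hab ▸ card_le_card (by simp [insert_subset_iff, ha, hb])
  rw [card_compl, Fintype.card_fin, card_sdiff_pair ha hb hab]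
  omega

theorem map_wtF_cylinder_of_vanishing (ha : a ∈ J) (hb : b ∈ J) (hab : a ≠ b) :
    (cylinder (J \ {a, b})ᶜ a b univ).val.map (wtF (cylinder J a b S))
      = Fintype.card K ^ (m - #J)
          • univ.val.map fun p => Fintype.card K ^ (#J - 2) * pairWeight S p := by
  rw [Multiset.map_congr rfl fun x hx =>
      wtF_cylinder_of_forall_eq_zero ha hb hab (mem_cylinder_compl_univ.1 hx),
    ← card_compl_sdiff_pair ha hb hab, ← Multiset.map_nsmul,
    ← map_eval_cylinder (by simp) (by simp) hab, Multiset.map_map]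
  rfl

theorem map_wtF_cylinder_of_nonvanishing (ha : a ∈ J) (hb : b ∈ J) (hab : a ≠ b) :
    (cylinder (J \ {a, b})ᶜ a b univ)ᶜ.val.map (wtF (cylinder J a b S))
      = Multiset.replicate ((Fintype.card K ^ #J - Fintype.card K ^ 2) * Fintype.card K ^ (m - #J))
          ((Fintype.card K - 1) * Fintype.card K ^ (#J - 3) * #S) := by
  have card_eq : #(cylinder (K := K) (J \ {a, b})ᶜ a b univ)ᶜ
      = (Fintype.card K ^ #J - Fintype.card K ^ 2) * Fintype.card K ^ (m - #J) := by
    have le_m : #J ≤ m := by simpa using card_le_univ J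
    rw [card_compl, card_cylinder (by simp) (by simp) hab, card_compl_sdiff_pair ha hb hab,
      Fintype.card_fun, Fintype.card_fin, card_univ, Fintype.card_prod, Nat.sub_mul, ← pow_add,
      Nat.add_sub_cancel' le_m, ← sq, mul_comm]
  rw [← card_eq]
  refine (Multiset.map_congr rfl fun x hx => ?_).trans (Multiset.map_const' ..)
  obtain ⟨j, hj, hxj⟩ : ∃ j ∈ J \ {a, b}, x j ≠ 0 := by
    simpa only [mem_val, mem_compl, mem_cylinder_compl_univ, not_forall, exists_prop] using hx
  exact wtF_cylinder_of_ne_zero ha hb hab hj hxj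

theorem map_wtF_cylinder (ha : a ∈ J) (hb : b ∈ J) (hab : a ≠ b) :
    univ.val.map (wtF (cylinder J a b S))
      = (Fintype.card K ^ (m - #J)
          • univ.val.map fun p => Fintype.card K ^ (#J - 2) * pairWeight S p)
        + Multiset.replicate
            ((Fintype.card K ^ #J - Fintype.card K ^ 2) * Fintype.card K ^ (m - #J))
            ((Fintype.card K - 1) * Fintype.card K ^ (#J - 3) * #S) := by
  rw [← map_wtF_cylinder_of_vanishing ha hb hab, ← map_wtF_cylinder_of_nonvanishing ha hb hab,
    ← Multiset.map_add, ← disjUnion_val _ _ disjoint_compl_right, disjUnion_eq_union, union_compl]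

end PairWeight

section DisjointPairs

variable {K : Type} [Field K] [Fintype K] [DecidableEq K] {w : K}

/-- The pairs `(s, t)` such that, in coordinates with respect to `1, w`, no coordinate is nonzero
in both `s` and `t`. This list of them is complete only when `K` has four elements. -/
def disjointPairs (w : K) : Finset (K × K) :=
  {p | p.1 = 0 ∨ p.2 = 0 ∨ p = (1, w) ∨ p = (w, 1)}

theorem mem_disjointPairs {p : K × K} :
    p ∈ disjointPairs w ↔ p.1 = 0 ∨ p.2 = 0 ∨ p = (1, w) ∨ p = (w, 1) := by
  simp [disjointPairs]

theorem sum_disjointPairs (hw0 : w ≠ 0) (hw1 : w ≠ 1) (f : K × K → ℕ) :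
    ∑ p ∈ disjointPairs w, f p
      = ∑ t, f (0, t) + ∑ s ∈ {0}ᶜ, f (s, 0) + f (1, w) + f (w, 1) := by
  have eq_insert : disjointPairs w
      = insert (w, 1) (insert (1, w) ({0} ×ˢ univ ∪ {0}ᶜ ×ˢ {0})) := by
    ext ⟨s, t⟩
    simp only [mem_disjointPairs, mem_insert, mem_union, mem_product, mem_singleton, mem_univ,
      mem_compl]
    tauto
  have axes_disjoint : Disjoint (({0} : Finset K) ×ˢ (univ : Finset K)) ({0}ᶜ ×ˢ {0}) :=
    disjoint_product.2 (.inl disjoint_compl_right)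
  rw [eq_insert, sum_insert (by simp [hw0.symm, hw1]), sum_insert (by simp [hw0.symm]),
    sum_union axes_disjoint, sum_product, sum_product]
  simp only [sum_singleton]
  ring

theorem card_disjointPairs (hw0 : w ≠ 0) (hw1 : w ≠ 1) :
    #(disjointPairs w) = 2 * Fintype.card K + 1 := by
  have one_le : 1 ≤ Fintype.card K := Fintype.card_pos
  rw [card_eq_sum_ones, sum_disjointPairs hw0 hw1]
  simp only [sum_const, card_univ, card_compl, card_singleton, smul_eq_mul]
  omega

theorem pairWeight_disjointPairs (hw0 : w ≠ 0) (hw1 : w ≠ 1) (x y : K) :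
    pairWeight (disjointPairs w) (x, y)
      = (if x = 0 then 0 else Fintype.card K - 1) + (if y = 0 then 0 else Fintype.card K - 1)
        + (if x + y * w = 0 then 0 else 1) + (if x * w + y = 0 then 0 else 1) := by
  have axis (z : K) (s : Finset K) (hs : {0}ᶜ ⊆ s) :
      ∑ t ∈ s, (if z * t ≠ 0 then 1 else 0) = if z = 0 then 0 else Fintype.card K - 1 := by
    rw [← card_filter]
    split_ifs with hz
    · simp [hz]
    · rw [← card_singleton (0 : K), ← card_compl]
      congr 1
      ext t
      simpa [hz] using fun ht => hs (by simpa using ht)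
  rw [pairWeight, card_filter, sum_disjointPairs hw0 hw1]
  simp only [mul_zero, zero_add, add_zero, mul_one]
  rw [axis x _ Subset.rfl, axis y _ (subset_univ _)]
  simp only [ne_eq, ite_not]
  ring

end DisjointPairs

section FieldWithFourElements

variable {K : Type} [Field K] {w : K}

theorem ne_zero_of_sq_add_self_add_one (hw : w ^ 2 + w + 1 = 0) : w ≠ 0 := by
  rintro rfl
  simp at hw

theorem add_one_ne_zero_of_sq_add_self_add_one (hw : w ^ 2 + w + 1 = 0) : w + 1 ≠ 0 := by
  intro h
  exact one_ne_zero (α := K) (by linear_combination hw - w * h)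

theorem ne_one_of_sq_add_self_add_one [CharP K 2] (hw : w ^ 2 + w + 1 = 0) : w ≠ 1 := by
  rw [Ne, ← CharTwo.add_eq_zero]
  exact add_one_ne_zero_of_sq_add_self_add_one hw

theorem e2_zero : (e2 0 : K) = 0 := by simp [e2]

theorem e2_one : (e2 1 : K) = 1 := by simp [e2, ZMod.val_one]

theorem e2_add_mul_e2_injective [CharP K 2] (hw : w ^ 2 + w + 1 = 0) :
    Function.Injective fun p : ZMod 2 × ZMod 2 => (e2 p.1 + w * e2 p.2 : K) := by
  have w_ne_zero := ne_zero_of_sq_add_self_add_one hw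
  have w_ne_one := ne_one_of_sq_add_self_add_one hw
  have w_add_one_ne_zero := add_one_ne_zero_of_sq_add_self_add_one hw
  have eq_zero_or_one : ∀ c : ZMod 2, c = 0 ∨ c = 1 := by decide
  rintro ⟨u, v⟩ ⟨u', v'⟩ h
  rcases eq_zero_or_one u with rfl | rfl <;> rcases eq_zero_or_one v with rfl | rfl <;>
    rcases eq_zero_or_one u' with rfl | rfl <;> rcases eq_zero_or_one v' with rfl | rfl <;>
    grind [e2_zero, e2_one]

variable [Fintype K]

theorem charP_two_of_card_eq_four (hK : Fintype.card K = 4) : CharP K 2 :=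
  charP_of_card_eq_prime_pow (f := 2) hK

theorem e2_add_mul_e2_bijective (hK : Fintype.card K = 4) (hw : w ^ 2 + w + 1 = 0) :
    Function.Bijective fun p : ZMod 2 × ZMod 2 => (e2 p.1 + w * e2 p.2 : K) := by
  have := charP_two_of_card_eq_four hK
  exact (Fintype.bijective_iff_injective_and_card _).2 ⟨e2_add_mul_e2_injective hw, by simp [hK]⟩

theorem univ_val_of_card_eq_four (hK : Fintype.card K = 4) (hw : w ^ 2 + w + 1 = 0) :
    (univ : Finset K).val = {0, w, 1, 1 + w} := by
  have univ_pairs : (univ : Finset (ZMod 2 × ZMod 2)).val = {(0, 0), (0, 1), (1, 0), (1, 1)} := rfl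
  rw [← Multiset.map_univ_val_equiv (Equiv.ofBijective _ (e2_add_mul_e2_bijective hK hw)),
    univ_pairs]
  simp [e2_zero, e2_one]

variable [DecidableEq K]

theorem mem_disjointPairs_iff [CharP K 2] (hw : w ^ 2 + w + 1 = 0) (u v u' v' : ZMod 2) :
    ((e2 u + w * e2 v, e2 u' + w * e2 v') : K × K) ∈ disjointPairs w
      ↔ (u = 0 ∨ u' = 0) ∧ (v = 0 ∨ v' = 0) := by
  have eq_iff (p q : ZMod 2 × ZMod 2) :
      (e2 p.1 + w * e2 p.2 : K) = e2 q.1 + w * e2 q.2 ↔ p = q :=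
    (e2_add_mul_e2_injective hw).eq_iff
  have eq_zero_iff (u v : ZMod 2) := by simpa [e2_zero] using eq_iff (u, v) (0, 0)
  have eq_one_iff (u v : ZMod 2) := by simpa [e2_zero, e2_one] using eq_iff (u, v) (1, 0)
  have eq_w_iff (u v : ZMod 2) := by simpa [e2_zero, e2_one] using eq_iff (u, v) (0, 1)
  simp only [mem_disjointPairs, Prod.mk.injEq, eq_zero_iff, eq_one_iff, eq_w_iff]
  revert u v u' v'
  decide

theorem card_disjointPairs_of_card_eq_four (hK : Fintype.card K = 4) (hw : w ^ 2 + w + 1 = 0) :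
    #(disjointPairs w) = 9 := by
  have := charP_two_of_card_eq_four hK
  rw [card_disjointPairs (ne_zero_of_sq_add_self_add_one hw) (ne_one_of_sq_add_self_add_one hw),
    hK]

theorem map_pairWeight_disjointPairs (hK : Fintype.card K = 4) (hw : w ^ 2 + w + 1 = 0) :
    univ.val.map (pairWeight (disjointPairs w))
      = Multiset.replicate 1 0 + Multiset.replicate 6 5 + Multiset.replicate 3 8
        + Multiset.replicate 6 7 := by
  have := charP_two_of_card_eq_four hK
  have w_ne_zero := ne_zero_of_sq_add_self_add_one hw
  have w_ne_one := ne_one_of_sq_add_self_add_one hw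
  have weight_formula := pairWeight_disjointPairs w_ne_zero w_ne_one
  have univ_val := univ_val_of_card_eq_four hK hw
  have one_add_w : 1 + w ≠ 0 := add_comm w 1 ▸ add_one_ne_zero_of_sq_add_self_add_one hw
  have row_zero : univ.val.map (fun y => pairWeight (disjointPairs w) (0, y)) = {0, 5, 5, 5} := by
    simp [univ_val, weight_formula, hK, w_ne_zero, one_add_w]
  have row_one : univ.val.map (fun y => pairWeight (disjointPairs w) (1, y)) = {5, 7, 8, 7} := by
    have one_add_w_mul_w : 1 + w * w ≠ 0 := fun h => w_ne_zero (by linear_combination hw - h)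
    have one_add_one_add_w_mul_w : 1 + (1 + w) * w = 0 := by linear_combination hw
    have w_add_one_add_w : w + (1 + w) ≠ 0 := by
      rw [add_left_comm, CharTwo.add_self_eq_zero, add_zero]
      exact one_ne_zero
    simp [univ_val, weight_formula, hK, w_ne_zero, one_add_w, one_add_w_mul_w,
      one_add_one_add_w_mul_w, w_add_one_add_w, add_comm w 1, CharTwo.add_self_eq_zero]
  rw [map_pairWeight, row_zero, row_one, hK]
  decide

end FieldWithFourElements

section DefiningSet

variable {m : ℕ} {A B : Finset (Fin m)} {a b : Fin m}

theorem mem_delta {v : Fin m → ZMod 2} : v ∈ delta A ↔ ∀ i ∉ A, v i = 0 := by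
  simp only [delta, supp, mem_filter, mem_univ, true_and, subset_iff]
  exact forall_congr' fun i => not_imp_comm

theorem mem_delta_union (hA : A \ B = {a}) (hB : B \ A = {b}) {v : Fin m → ZMod 2} :
    v ∈ delta A ∪ delta B ↔ (∀ i ∉ A ∪ B, v i = 0) ∧ (v a = 0 ∨ v b = 0) := by
  have mem_diff_A (i : Fin m) : i ∈ A ∧ i ∉ B ↔ i = a := by
    rw [← mem_sdiff, hA, mem_singleton]
  have mem_diff_B (i : Fin m) : i ∈ B ∧ i ∉ A ↔ i = b := by
    rw [← mem_sdiff, hB, mem_singleton]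
  simp only [mem_union, mem_delta]
  constructor
  · rintro (h | h)
    · exact ⟨fun i hi => h i (by tauto), .inr (h b ((mem_diff_B b).2 rfl).2)⟩
    · exact ⟨fun i hi => h i (by tauto), .inl (h a ((mem_diff_A a).2 rfl).2)⟩
  · rintro ⟨h, hab⟩
    by_contra! hne
    grind

variable {K : Type} [Field K] [Fintype K] {w : K}

theorem dvec_bijective (hK : Fintype.card K = 4) (hw : w ^ 2 + w + 1 = 0) :
    Function.Bijective (dvec (m := m) w) :=
  (Function.Bijective.piMap fun _ => e2_add_mul_e2_bijective hK hw).comp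
    (Equiv.arrowProdEquivProdArrow (Fin m) (fun _ => ZMod 2) fun _ => ZMod 2).symm.bijective

variable [DecidableEq K]

theorem image_dvec_eq_cylinder (hK : Fintype.card K = 4) (hw : w ^ 2 + w + 1 = 0)
    (hA : A \ B = {a}) (hB : B \ A = {b}) :
    ((delta A ∪ delta B) ×ˢ (delta A ∪ delta B)).image (dvec w)
      = cylinder (A ∪ B) a b (disjointPairs w) := by
  have := charP_two_of_card_eq_four hK
  ext d
  obtain ⟨⟨u, v⟩, rfl⟩ := (dvec_bijective hK hw).surjective d
  have dvec_eq_zero_iff (i : Fin m) : dvec w (u, v) i = 0 ↔ u i = 0 ∧ v i = 0 := by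
    simpa [dvec, e2_zero] using (e2_add_mul_e2_injective hw).eq_iff (a := (u i, v i)) (b := (0, 0))
  rw [(dvec_bijective hK hw).injective.mem_finset_image, mem_product, mem_delta_union hA hB,
    mem_delta_union hA hB, mem_cylinder]
  simp only [dvec_eq_zero_iff, forall_and]
  simp only [dvec, mem_disjointPairs_iff hw]
  exact and_and_and_comm

variable {J : Finset (Fin m)}

theorem single_mem_cylinder_disjointPairs (hab : a ≠ b) {j : Fin m} (hj : j ∈ J) :
    Pi.single j 1 ∈ cylinder J a b (disjointPairs w) := by
  refine mem_cylinder.2 ⟨fun i hi => ?_, mem_disjointPairs.2 ?_⟩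
  · have hij : i ≠ j := by rintro rfl; exact hi hj
    simp [hij]
  · by_cases hja : a = j
    · simp [← hja, hab.symm]
    · simp [hja]

theorem card_image_codeword_cylinder_disjointPairs (hab : a ≠ b) :
    #(univ.image fun x => codeword ((cylinder J a b (disjointPairs w)).erase 0) x)
      = Fintype.card K ^ #J :=
  card_image_codeword (fun _ hd => (mem_cylinder.1 (mem_of_mem_erase hd)).1) fun _ hj =>
    mem_erase.2 ⟨by simp, single_mem_cylinder_disjointPairs hab hj⟩

theorem card_erase_zero_cylinder_disjointPairs (hK : Fintype.card K = 4)
    (hw : w ^ 2 + w + 1 = 0) (ha : a ∈ J) (hb : b ∈ J) (hab : a ≠ b) :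
    #((cylinder J a b (disjointPairs w)).erase 0) = 9 * 4 ^ (#J - 2) - 1 := by
  rw [card_erase_of_mem (mem_cylinder.2 ⟨by simp, mem_disjointPairs.2 (by simp)⟩),
    card_cylinder ha hb hab, card_disjointPairs_of_card_eq_four hK hw, hK, mul_comm]

theorem map_wtF_cylinder_disjointPairs (hK : Fintype.card K = 4) (hw : w ^ 2 + w + 1 = 0)
    (ha : a ∈ J) (hb : b ∈ J) (hab : a ≠ b) :
    univ.val.map (wtF (cylinder J a b (disjointPairs w)))
      = Multiset.replicate (1 * 4 ^ (m - #J)) 0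
        + Multiset.replicate (6 * 4 ^ (m - #J)) (5 * 4 ^ (#J - 2))
        + Multiset.replicate (3 * 4 ^ (m - #J)) (8 * 4 ^ (#J - 2))
        + Multiset.replicate (6 * 4 ^ (m - #J)) (7 * 4 ^ (#J - 2))
        + Multiset.replicate ((4 ^ #J - 16) * 4 ^ (m - #J)) (27 * 4 ^ (#J - 3)) := by
  have scaled_pairWeights : univ.val.map
      (fun p => Fintype.card K ^ (#J - 2) * pairWeight (disjointPairs w) p)
      = (univ.val.map (pairWeight (disjointPairs w))).map (4 ^ (#J - 2) * ·) := by
    rw [Multiset.map_map, hK, Function.comp_def]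
  rw [map_wtF_cylinder ha hb hab, scaled_pairWeights, map_pairWeight_disjointPairs hK hw,
    card_disjointPairs_of_card_eq_four hK hw, hK]
  simp only [Multiset.map_add, Multiset.map_replicate, nsmul_add, Multiset.nsmul_replicate]
  ring_nf

theorem card_erase_zero_image_wtF_cylinder_disjointPairs (hK : Fintype.card K = 4)
    (hw : w ^ 2 + w + 1 = 0) (ha : a ∈ J) (hb : b ∈ J) (hab : a ≠ b) (hJ : 3 ≤ #J) :
    #((univ.image (wtF (cylinder J a b (disjointPairs w)))).erase 0) = 4 := by
  obtain ⟨k, hk⟩ := Nat.exists_eq_add_of_le' hJ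
  have four_pow_pos : 0 < 4 ^ k := by positivity
  have vanishing_multiplicity_ne_zero : 4 ^ (m - (k + 3)) ≠ 0 := by positivity
  have generic_multiplicity_ne_zero : (4 ^ (k + 3) - 16) * 4 ^ (m - (k + 3)) ≠ 0 := by
    refine mul_ne_zero ?_ vanishing_multiplicity_ne_zero
    rw [pow_add]
    omega
  have weights_eq : (univ.image (wtF (cylinder J a b (disjointPairs w)))).erase 0
      = {5 * 4 ^ (k + 1), 8 * 4 ^ (k + 1), 7 * 4 ^ (k + 1), 27 * 4 ^ k} := by
    rw [image, map_wtF_cylinder_disjointPairs hK hw ha hb hab, hk]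
    ext v
    simp only [Nat.reduceSubDiff, mem_erase, Multiset.mem_toFinset, Multiset.mem_add,
      Multiset.mem_replicate, mem_insert, mem_singleton, ne_eq, generic_multiplicity_ne_zero,
      mul_eq_zero, vanishing_multiplicity_ne_zero, OfNat.ofNat_ne_zero, or_self,
      not_false_eq_true, true_and]
    rw [pow_succ]
    omega
  rw [weights_eq, pow_succ, card_insert_of_notMem, card_insert_of_notMem, card_insert_of_notMem,
    card_singleton] <;>
    simp only [mem_insert, mem_singleton] <;> omega

end DefiningSet

theorem two_pow_two_mul_sub (n j : ℕ) : 2 ^ (2 * n - 2 * j) = 4 ^ (n - j) := by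
  rw [← Nat.mul_sub]
  exact pow_mul 2 2 _

theorem two_pow_two_mul_add_one {n : ℕ} (hn : 1 ≤ n) : 2 ^ (2 * n + 1) = 8 * 4 ^ (n - 1) := by
  rw [show 2 * n + 1 = 3 + 2 * (n - 1) by omega, pow_add, pow_mul]
  norm_num

/-- Corollary 4.9(iii): for `A, B ⊆ [m]` with `A ∩ B ≠ ∅` and `|A\B| = |B\A| = 1`,
`Δ = Δ_A ∪ Δ_B` and `D = Δ + wΔ`, the code `C_{D^*}` has length `9·2^{2|A|−2}−1`,
`4^{|A|+1}` codewords, the stated weight distribution, and is a four-weight quaternary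
code. -/
theorem quaternary_code_intersecting_equal_size {m : ℕ} (hm : 1 ≤ m)
    (hF : Fintype.card F = 4) (w : F) (hw : w ^ 2 + w + 1 = 0)
    (A B : Finset (Fin m)) (hint : (A ∩ B).Nonempty)
    (hsA : (A \ B).card = 1) (hsB : (B \ A).card = 1) :
    ((((delta A ∪ delta B) ×ˢ (delta A ∪ delta B)).image (dvec w)).erase 0).card
      = 9 * 2 ^ (2 * A.card - 2) - 1
    ∧ (Finset.univ.image
        (fun x : Fin m → F => codeword
          ((((delta A ∪ delta B) ×ˢ (delta A ∪ delta B)).image (dvec w)).erase 0) x)).card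
      = 4 ^ (A.card + 1)
    ∧ (Finset.univ.val.map
        (fun x : Fin m → F =>
          wtF ((((delta A ∪ delta B) ×ˢ (delta A ∪ delta B)).image (dvec w)).erase 0) x))
      = Multiset.replicate (1 * 4 ^ (m - A.card - 1)) 0
        + Multiset.replicate (6 * 4 ^ (m - A.card - 1)) (5 * 2 ^ (2 * A.card - 2))
        + Multiset.replicate (3 * 4 ^ (m - A.card - 1)) (2 ^ (2 * A.card + 1))
        + Multiset.replicate (6 * 4 ^ (m - A.card - 1)) (7 * 2 ^ (2 * A.card - 2))
        + Multiset.replicate ((4 ^ (A.card + 1) - 16) * 4 ^ (m - A.card - 1))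
            (27 * 2 ^ (2 * A.card - 4))
    ∧ ((Finset.univ.image
        (fun x : Fin m → F =>
          wtF ((((delta A ∪ delta B) ×ˢ (delta A ∪ delta B)).image (dvec w)).erase 0) x)).erase
          0).card = 4 := by
  obtain ⟨a, hA⟩ := card_eq_one.1 hsA
  obtain ⟨b, hB⟩ := card_eq_one.1 hsB
  obtain ⟨haA, haB⟩ : a ∈ A ∧ a ∉ B := mem_sdiff.1 (hA ▸ mem_singleton_self a)
  have hbB : b ∈ B := sdiff_subset (hB ▸ mem_singleton_self b)
  have hab : a ≠ b := fun h => haB (h ▸ hbB)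
  have ha : a ∈ A ∪ B := mem_union_left B haA
  have hb : b ∈ A ∪ B := mem_union_right A hbB
  have card_union : #(A ∪ B) = #A + 1 := by
    rw [union_comm, ← card_sdiff_add_card B A, hsB, add_comm]
  have two_le : 2 ≤ #A := by
    rw [← card_sdiff_add_card_inter A B, hsA]
    exact Nat.add_le_add_left hint.card_pos 1
  rw [image_dvec_eq_cylinder hF hw hA hB, two_pow_two_mul_sub _ 1, two_pow_two_mul_sub _ 2,
    two_pow_two_mul_add_one (by omega), Nat.sub_sub]
  simp only [wtF_erase_zero]
  rw [card_erase_zero_cylinder_disjointPairs hF hw ha hb hab,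
    card_image_codeword_cylinder_disjointPairs hab, map_wtF_cylinder_disjointPairs hF hw ha hb hab,
    card_erase_zero_image_wtF_cylinder_disjointPairs hF hw ha hb hab (by omega), hF, card_union]
  exact ⟨rfl, rfl, rfl, rfl⟩
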